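/- arXiv:1610.09215 — 7 statements merged into one kernel-verified Lean document; each statement's English description precedes it below -/
import Mathlib

section
/- Let γ > 0, β > 0, σ_w² > 0 and 0 < pmin < pmax be real numbers, and let f : ℝ → ℝ be continuous on [pmin, pmax]. Suppose that for all p ∈ [pmin, pmax], γ · ( σ_w² + (β/2) · ∫_{pmin}^{p} t f(t) dt ) = p. Then pmin = γ σ_w² and f(p) = 2/(γ β p) for all p ∈ [pmin, pmax]. -/
open Set intervalIntegral

/-!
At `p = pmin` the integral vanishes, which gives `pmin = γ σw²`. By the fundamental theorem of
calculus, differentiating the SNIR equation within `[pmin, pmax]` gives `γ (β/2) p f(p) = 1`.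
Taking derivatives within the closed interval, where they are unique, covers both endpoints as well.
-/

/-- If every power `p` in `[pmin, pmax]` satisfies the constant-SNIR equation
`γ (σw² + (β/2) ∫_{pmin}^p t f(t) dt) = p`, then `pmin = γ σw²` and
`f(p) = 2/(γ β p)` on `[pmin, pmax]`. -/
theorem power_density_perfect_cancellation
    (γ β σw2 pmin pmax : ℝ) (hγ : 0 < γ) (hβ : 0 < β) (hσ : 0 < σw2)
    (hpmin : 0 < pmin) (hlt : pmin < pmax)
    (f : ℝ → ℝ) (hf : ContinuousOn f (Icc pmin pmax))
    (hSNIR : ∀ p ∈ Icc pmin pmax,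
      γ * (σw2 + β / 2 * ∫ t in pmin..p, t * f t) = p) :
    pmin = γ * σw2 ∧ ∀ p ∈ Icc pmin pmax, f p = 2 / (γ * β * p) := by
  refine ⟨?_, fun p hp => ?_⟩
  · simpa using (hSNIR pmin (left_mem_Icc.2 hlt.le)).symm
  have hg : ContinuousOn (fun t => t * f t) (Icc pmin pmax) := continuousOn_id.mul hf
  have hint : IntervalIntegrable (fun t => t * f t) MeasureTheory.volume pmin p :=
    (hg.mono (Icc_subset_Icc_right hp.2)).intervalIntegrable_of_Icc hp.1
  -- The `Fact` selects the version of the fundamental theorem for `𝓝[Icc pmin pmax] p`.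
  haveI : Fact (p ∈ Icc pmin pmax) := ⟨hp⟩
  have hI : HasDerivWithinAt (fun u => ∫ t in pmin..u, t * f t) (p * f p) (Icc pmin pmax) p :=
    integral_hasDerivWithinAt_right hint
      (hg.stronglyMeasurableAtFilter_nhdsWithin measurableSet_Icc p) (hg p hp)
  have hL := ((hI.const_mul (β / 2)).const_add σw2).const_mul γ
  have hid := (hasDerivWithinAt_id p (Icc pmin pmax)).congr hSNIR (hSNIR p hp)
  have key : γ * (β / 2 * (p * f p)) = 1 := (uniqueDiffOn_Icc hlt p hp).eq_deriv _ hL hid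
  have hp0 : 0 < p := hpmin.trans_le hp.1
  rw [eq_div_iff (by positivity)]
  linarith
end

section
/- Let γ > 0, σ_w² > 0 and pmax > γ σ_w² be real numbers. Set pmin = γ σ_w², β = (2/γ) log(pmax/pmin), and f(t) = 2/(γ β t) for t ∈ [pmin, pmax]. Then for every p ∈ [pmin, pmax], the signal to noise plus interference ratio p / ( σ_w² + (β/2) ∫_{pmin}^{p} t f(t) dt ) equals γ. -/
/-!
The density is chosen so that `t * f t` is constant, equal to `2 / (γ * β)`. The residual
interference at power `p` is therefore `(p - pmin) / γ = p / γ - σw2`, so noise plus interference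
is exactly `p / γ`.
-/

open Set intervalIntegral

/-- With `pmin = γ σw²`, `β = (2/γ) log(pmax/pmin)` and
`f(t) = 2/(γ β t)` on `[pmin, pmax]`, every `p ∈ [pmin, pmax]` has SNIR
`p / (σw² + (β/2) ∫_{pmin}^p t f(t) dt) = γ`. -/
theorem constant_SNIR_perfect_cancellation
    (γ σw2 pmax pmin β : ℝ) (f : ℝ → ℝ)
    (hγ : 0 < γ) (hσ : 0 < σw2) (hpmax : γ * σw2 < pmax)
    (hpmin : pmin = γ * σw2)
    (hβ : β = 2 / γ * Real.log (pmax / pmin))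
    (hf : ∀ t ∈ Icc pmin pmax, f t = 2 / (γ * β * t)) :
    ∀ p ∈ Icc pmin pmax,
      p / (σw2 + β / 2 * ∫ t in pmin..p, t * f t) = γ := by
  intro p hp
  have hpmin0 : 0 < pmin := hpmin ▸ mul_pos hγ hσ
  have hp0 : 0 < p := hpmin0.trans_le hp.1
  -- `pmin < pmax` makes the logarithm positive, so division by `β` is genuine.
  have hβ0 : 0 < β := by
    rw [hβ]
    exact mul_pos (div_pos two_pos hγ)
      (Real.log_pos ((one_lt_div hpmin0).2 (hpmin ▸ hpmax)))
  -- The integrand `t * f t` is the constant `2 / (γ * β)`.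
  have hint : ∫ t in pmin..p, t * f t = (p - pmin) * (2 / (γ * β)) := by
    rw [integral_congr (g := fun _ => 2 / (γ * β)), integral_const, smul_eq_mul]
    intro t ht
    rw [uIcc_of_le hp.1] at ht
    have ht0 : 0 < t := hpmin0.trans_le ht.1
    change t * f t = 2 / (γ * β)
    rw [hf t ⟨ht.1, ht.2.trans hp.2⟩]
    field_simp
  have hden : σw2 + β / 2 * ((p - pmin) * (2 / (γ * β))) = p / γ := by
    rw [hpmin]
    field_simp
    ring
  rw [hint, hden]
  field_simp
end

section
/- Let γ > 0, β > 0, σ_w² > 0, α ∈ [0, 1) and 0 < pmin < pmax be real numbers, and let f : ℝ → ℝ be continuous on [pmin, pmax]. Suppose that for all p ∈ [pmin, pmax], γ · ( σ_w² + (β/2) · ( ∫_{pmin}^{p} t f(t) dt + α ∫_{p}^{pmax} t f(t) dt ) ) = p. Then f(p) = 2/( γ β (1 − α) p ) for all p ∈ [pmin, pmax]. -/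
/-!
Write `G q = ∫ t in pmin..q, t * f t`. Splitting `∫_q^pmax = G pmax - G q` shows that
`γ β (1 - α) / 2 * G q` equals `q` minus a constant on `[pmin, pmax]`. By the fundamental theorem
of calculus, differentiating within `[pmin, pmax]` (where derivatives are unique, endpoints
included) gives `γ β (1 - α) / 2 * (p * f p) = 1`.
-/

open Set intervalIntegral

/-- Imperfect cancellation with constant efficiency: if for all
`p ∈ [pmin, pmax]`, `γ (σw² + (β/2)(∫_{pmin}^p t f + α ∫_p^{pmax} t f)) = p`,
then `f(p) = 2/(γ β (1-α) p)` on `[pmin, pmax]`. -/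
theorem power_density_constant_efficiency
    (γ β σw2 α pmin pmax : ℝ) (hγ : 0 < γ) (hβ : 0 < β) (hσ : 0 < σw2)
    (hα0 : 0 ≤ α) (hα1 : α < 1) (hpmin : 0 < pmin) (hlt : pmin < pmax)
    (f : ℝ → ℝ) (hf : ContinuousOn f (Icc pmin pmax))
    (hSNIR : ∀ p ∈ Icc pmin pmax,
      γ * (σw2 + β / 2 *
        ((∫ t in pmin..p, t * f t) + α * ∫ t in p..pmax, t * f t)) = p) :
    ∀ p ∈ Icc pmin pmax, f p = 2 / (γ * β * (1 - α) * p) := by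
  intro p hp
  have hg : ContinuousOn (fun t => t * f t) (Icc pmin pmax) := continuousOn_id.mul hf
  have hint : ∀ a ∈ Icc pmin pmax, ∀ b ∈ Icc pmin pmax,
      IntervalIntegrable (fun t => t * f t) MeasureTheory.volume a b := fun a ha b hb =>
    (hg.mono (uIcc_subset_Icc ha hb)).intervalIntegrable
  have hmin : pmin ∈ Icc pmin pmax := left_mem_Icc.2 hlt.le
  have hmax : pmax ∈ Icc pmin pmax := right_mem_Icc.2 hlt.le
  set T := ∫ t in pmin..pmax, t * f t with hT
  have hlin : ∀ q ∈ Icc pmin pmax,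
      γ * (σw2 + β / 2 * ((1 - α) * (∫ t in pmin..q, t * f t) + α * T)) = q := by
    intro q hq
    have hadd := integral_add_adjacent_intervals (hint pmin hmin q hq) (hint q hq pmax hmax)
    rw [hT, ← hadd]
    linear_combination hSNIR q hq
  -- The `Fact` lets the one-sided FTC instance for `𝓝[Icc pmin pmax] p` cover the endpoints too.
  haveI : Fact (p ∈ Icc pmin pmax) := ⟨hp⟩
  have hG : HasDerivWithinAt (fun u => ∫ t in pmin..u, t * f t) (p * f p) (Icc pmin pmax) p :=
    integral_hasDerivWithinAt_right (hint pmin hmin p hp)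
      (hg.stronglyMeasurableAtFilter_nhdsWithin measurableSet_Icc p) (hg p hp)
  have hL := (((((hG.const_mul (1 - α)).add_const (α * T)).const_mul (β / 2)).const_add
    σw2).const_mul γ)
  have hid := (hasDerivWithinAt_id p (Icc pmin pmax)).congr_of_mem hlin hp
  have key := (uniqueDiffOn_Icc hlt p hp).eq_deriv _ hL hid
  have hp0 : 0 < p := hpmin.trans_le hp.1
  have hα : 0 < 1 - α := sub_pos.2 hα1
  rw [eq_div_iff (by positivity)]
  linear_combination 2 * key
end

section
/- Let γ > 0, β > 0, σ_w² > 0, α ∈ [0, 1) and 0 < pmin < pmax be real numbers, and set f(t) = 2/( γ β (1 − α) t ) for t ∈ [pmin, pmax]. Suppose the boundary condition γ · ( σ_w² + (β/2) · α · ∫_{pmin}^{pmax} t f(t) dt ) = pmin holds. Then for every p ∈ [pmin, pmax], γ · ( σ_w² + (β/2) · ( ∫_{pmin}^{p} t f(t) dt + α ∫_{p}^{pmax} t f(t) dt ) ) = p; i.e., the SNIR is constant equal to γ for all transmit powers. -/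
/-!
On `[pmin, pmax]` the integrand `t * f t` is the constant `c = 2 / (γ β (1 - α))`, so every
integral is `c` times the length of its interval. Raising the power from `pmin` to `p` turns
the weight `α` into `1` on `[pmin, p]`, which changes the left-hand side by
`γ (β / 2) (1 - α) c (p - pmin) = p - pmin`; the boundary condition gives its value at `pmin`.
-/

open Set intervalIntegral

/-- With density `f(t) = 2/(γ β (1-α) t)` on `[pmin, pmax]` and the
boundary condition `γ (σw² + (β/2) α ∫_{pmin}^{pmax} t f(t) dt) = pmin`, the SNIR
`γ (σw² + (β/2)(∫_{pmin}^p t f + α ∫_p^{pmax} t f)) = p` holds for all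
`p ∈ [pmin, pmax]`. -/
theorem constant_SNIR_constant_efficiency
    (γ β σw2 α pmin pmax : ℝ) (f : ℝ → ℝ)
    (hγ : 0 < γ) (hβ : 0 < β) (hσ : 0 < σw2)
    (hα0 : 0 ≤ α) (hα1 : α < 1) (hpmin : 0 < pmin) (hlt : pmin < pmax)
    (hf : ∀ t ∈ Icc pmin pmax, f t = 2 / (γ * β * (1 - α) * t))
    (hbd : γ * (σw2 + β / 2 * (α * ∫ t in pmin..pmax, t * f t)) = pmin) :
    ∀ p ∈ Icc pmin pmax,
      γ * (σw2 + β / 2 *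
        ((∫ t in pmin..p, t * f t) + α * ∫ t in p..pmax, t * f t)) = p := by
  intro p hp
  have key : ∀ a b, pmin ≤ a → a ≤ b → b ≤ pmax →
      ∫ t in a..b, t * f t = 2 / (γ * β * (1 - α)) * (b - a) := by
    intro a b ha hab hb
    have hcongr : ∫ t in a..b, t * f t = ∫ _ in a..b, 2 / (γ * β * (1 - α)) := by
      apply intervalIntegral.integral_congr
      intro t ht
      rw [uIcc_of_le hab] at ht
      have ht0 : t ≠ 0 := (hpmin.trans_le (ha.trans ht.1)).ne'
      have h1 : 1 - α ≠ 0 := (sub_pos.2 hα1).ne'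
      simp only [hf t ⟨ha.trans ht.1, ht.2.trans hb⟩]
      field_simp
    rw [hcongr, intervalIntegral.integral_const, smul_eq_mul, mul_comm]
  rw [key pmin pmax le_rfl hlt.le le_rfl] at hbd
  rw [key pmin p le_rfl hp.1 hp.2, key p pmax hp.1 hp.2 le_rfl]
  have hc : γ * β / 2 * (1 - α) * (2 / (γ * β * (1 - α))) = 1 := by
    have h1 : 1 - α ≠ 0 := (sub_pos.2 hα1).ne'
    field_simp
  linear_combination hbd + (p - pmin) * hc
end

section
/- Let γ > 0, β > 0, σ_w² > 0, δ ≥ 0 and δ < pmin < pmax be real numbers, and let f : ℝ → ℝ be continuous on [pmin, pmax] with F(p) = ∫_{pmin}^{p} f(t) dt. Suppose that for all p ∈ [pmin, pmax], γ · ( σ_w² + (β/2) · ( ∫_{pmin}^{p} t f(t) dt + δ (1 − F(p)) ) ) = p. Then f(p) = 2/( γ β (p − δ) ) for all p ∈ [pmin, pmax]. -/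
/-!
Differentiating the SNIR identity in `p` gives `γ (β/2) (p f(p) - δ f(p)) = 1`, which is the claim
since `p > δ`. To treat the endpoints on the same footing as interior points, `f` is replaced by
its continuous extension `g` that is constant outside `[pmin, pmax]`: the primitives of `g` and
`t g(t)` are differentiable everywhere, and derivatives within `[pmin, pmax]` are unique.
-/

open Set intervalIntegral

/-- Imperfect cancellation with constant residual power `δ`: if for all
`p ∈ [pmin, pmax]`, `γ (σw² + (β/2)(∫_{pmin}^p t f(t) dt + δ (1 - F(p)))) = p`, where
`F(p) = ∫_{pmin}^p f(t) dt`, then `f(p) = 2/(γ β (p - δ))` on `[pmin, pmax]`. -/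
theorem power_density_constant_residual
    (γ β σw2 δ pmin pmax : ℝ) (hγ : 0 < γ) (hβ : 0 < β) (hσ : 0 < σw2)
    (hδ : 0 ≤ δ) (hδmin : δ < pmin) (hlt : pmin < pmax)
    (f : ℝ → ℝ) (hf : ContinuousOn f (Icc pmin pmax))
    (hSNIR : ∀ p ∈ Icc pmin pmax,
      γ * (σw2 + β / 2 *
        ((∫ t in pmin..p, t * f t) + δ * (1 - ∫ t in pmin..p, f t))) = p) :
    ∀ p ∈ Icc pmin pmax, f p = 2 / (γ * β * (p - δ)) := by
  intro p hp
  obtain ⟨g, hg, hgf⟩ : ∃ g : ℝ → ℝ, Continuous g ∧ ∀ x ∈ Icc pmin pmax, g x = f x :=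
    ⟨IccExtend hlt.le ((Icc pmin pmax).domRestrict f), hf.domRestrict.Icc_extend',
      fun x hx => by rw [IccExtend_of_mem _ _ hx]; rfl⟩
  have hmem : ∀ x ∈ Icc pmin pmax, ∀ t ∈ uIcc pmin x, t ∈ Icc pmin pmax := by
    intro x hx t ht
    rw [uIcc_of_le hx.1] at ht
    exact ⟨ht.1, ht.2.trans hx.2⟩
  have hid : ∀ x ∈ Icc pmin pmax,
      γ * (σw2 + β / 2 * ((∫ t in pmin..x, t * g t) + δ * (1 - ∫ t in pmin..x, g t))) = x := by
    intro x hx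
    rw [integral_congr (g := f) (fun t ht => hgf t (hmem x hx t ht)),
      integral_congr (f := fun t => t * g t) (g := fun t => t * f t)
        (fun t ht => congrArg (t * ·) (hgf t (hmem x hx t ht)))]
    exact hSNIR x hx
  have hd1 : HasDerivAt (fun x => ∫ t in pmin..x, t * g t) (p * g p) p :=
    (continuous_id.mul hg).integral_hasStrictDerivAt pmin p |>.hasDerivAt
  have hd2 : HasDerivAt (fun x => ∫ t in pmin..x, g t) (g p) p :=
    hg.integral_hasStrictDerivAt pmin p |>.hasDerivAt
  have hd := ((((hd1.add ((hd2.const_sub 1).const_mul δ)).const_mul (β / 2)).const_add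
    σw2).const_mul γ).hasDerivWithinAt (s := Icc pmin pmax)
  have hd' := (hasDerivWithinAt_id p (Icc pmin pmax)).congr (fun x hx => hid x hx) (hid p hp)
  have heq := (uniqueDiffOn_Icc hlt p hp).eq_deriv _ hd hd'
  rw [hgf p hp] at heq
  have hpos : 0 < p - δ := by linarith [hp.1]
  rw [eq_div_iff (by positivity)]
  linarith
end

section
/- Let γ > 0, σ_w² > 0 and 0 < δ < pmax be real numbers with γ σ_w² ≤ pmax and γ σ_w² > δ. Then there exists a unique x ∈ (δ, pmax] satisfying x = γ σ_w² + δ · log( (pmax − δ)/(x − δ) ). Equivalently, the system of equations pmin = γ ( σ_w² + δ β/2 ) and β = (2/γ) log( (pmax − δ)/(pmin − δ) ) has a unique solution (pmin, β) with pmin ∈ (δ, pmax] (and β ≥ 0). -/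
/-!
On `(δ, pmax]` the right-hand side `γ σw² + δ log ((pmax - δ) / (x - δ))` is antitone in `x` while
the left-hand side is strictly increasing, so there is at most one solution. The right-hand side is
at least `x` at `x = γ σw²` and at most `x` at `x = pmax`, so the intermediate value theorem
on `[γ σw², pmax]`, which lies to the right of the singularity `δ`, gives a solution. Substituting
the second equation of the system into the first yields the scalar equation, so the
system inherits existence and uniqueness; `β ≥ 0` because the argument of the logarithm is at
least `1`.
-/

open Set

theorem log_ratio_antitone {δ pmax x y : ℝ} (hδ : δ < pmax) (hx : δ < x) (hxy : x ≤ y) :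
    Real.log ((pmax - δ) / (y - δ)) ≤ Real.log ((pmax - δ) / (x - δ)) := by
  have h1 : 0 < pmax - δ := sub_pos.2 hδ
  have h2 : 0 < x - δ := sub_pos.2 hx
  have h3 : 0 < y - δ := by linarith
  apply Real.log_le_log (by positivity)
  gcongr

theorem log_ratio_nonneg {δ pmax x : ℝ} (hx : x ∈ Ioc δ pmax) :
    0 ≤ Real.log ((pmax - δ) / (x - δ)) := by
  apply Real.log_nonneg
  rw [one_le_div (sub_pos.2 hx.1)]
  linarith [hx.2]

/-- The scalar equation, with `c` standing for `γ σw²`. -/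
theorem existsUnique_scalar {c δ pmax : ℝ} (hδ0 : 0 < δ) (hδmax : δ < pmax) (hle : c ≤ pmax)
    (hgt : δ < c) :
    ∃! x : ℝ, x ∈ Ioc δ pmax ∧ x = c + δ * Real.log ((pmax - δ) / (x - δ)) := by
  apply existsUnique_of_exists_of_unique
  · have hcont : ContinuousOn (fun x => x - δ * Real.log ((pmax - δ) / (x - δ)))
        (Icc c pmax) := by
      have hne : ∀ x ∈ Icc c pmax, x - δ ≠ 0 := fun x hx => by
        have := hx.1
        exact (by linarith : 0 < x - δ).ne'
      refine continuousOn_id.sub (continuousOn_const.mul (ContinuousOn.log ?_ ?_))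
      · exact continuousOn_const.div (by fun_prop) hne
      · exact fun x hx => div_ne_zero (sub_pos.2 hδmax).ne' (hne x hx)
    have hlow : c - δ * Real.log ((pmax - δ) / (c - δ)) ≤ c := by
      have := mul_nonneg hδ0.le (log_ratio_nonneg (x := c) ⟨hgt, hle⟩)
      linarith
    have hhigh : c ≤ pmax - δ * Real.log ((pmax - δ) / (pmax - δ)) := by
      rw [div_self (sub_pos.2 hδmax).ne']
      simpa using hle
    obtain ⟨x, hx, hxc⟩ := intermediate_value_Icc hle hcont ⟨hlow, hhigh⟩
    refine ⟨x, ⟨hgt.trans_le hx.1, hx.2⟩, ?_⟩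
    simp only at hxc
    linarith
  · rintro x y ⟨hx, hxe⟩ ⟨hy, hye⟩
    apply le_antisymm
    · by_contra! h
      have := mul_le_mul_of_nonneg_left (log_ratio_antitone hδmax hy.1 h.le) hδ0.le
      linarith
    · by_contra! h
      have := mul_le_mul_of_nonneg_left (log_ratio_antitone hδmax hx.1 h.le) hδ0.le
      linarith



/-- For the constant-residual-power model, there is a unique
`x ∈ (δ, pmax]` with `x = γ σw² + δ log((pmax-δ)/(x-δ))`; equivalently, the system
`pmin = γ (σw² + δ β/2)`, `β = (2/γ) log((pmax-δ)/(pmin-δ))` has a unique solution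
`(pmin, β)` with `pmin ∈ (δ, pmax]` and `β ≥ 0`. -/
theorem unique_pmin_constant_residual
    (γ σw2 δ pmax : ℝ) (hγ : 0 < γ) (hσ : 0 < σw2)
    (hδ0 : 0 < δ) (hδmax : δ < pmax) (hle : γ * σw2 ≤ pmax) (hgt : δ < γ * σw2) :
    (∃! x : ℝ, x ∈ Ioc δ pmax ∧
      x = γ * σw2 + δ * Real.log ((pmax - δ) / (x - δ))) ∧
    (∃! q : ℝ × ℝ, q.1 ∈ Ioc δ pmax ∧ 0 ≤ q.2 ∧
      q.1 = γ * (σw2 + δ * q.2 / 2) ∧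
      q.2 = 2 / γ * Real.log ((pmax - δ) / (q.1 - δ))) := by
  have hscalar := existsUnique_scalar hδ0 hδmax hle hgt
  refine ⟨hscalar, ?_⟩
  have hsubst : ∀ L : ℝ, γ * (σw2 + δ * (2 / γ * L) / 2) = γ * σw2 + δ * L := fun L => by
    field_simp
  obtain ⟨x, ⟨hx, hxe⟩, huniq⟩ := hscalar
  refine ⟨(x, 2 / γ * Real.log ((pmax - δ) / (x - δ))), ⟨hx, ?_, ?_, rfl⟩, ?_⟩
  · exact mul_nonneg (by positivity) (log_ratio_nonneg hx)
  · exact hxe.trans (hsubst _).symm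
  · rintro ⟨p, b⟩ ⟨hp, -, hpe, hb⟩
    dsimp only at hp hpe hb
    subst hb
    rw [hsubst] at hpe
    obtain rfl := huniq p ⟨hp, hpe⟩
    rfl
end

section
/- Let γ > 0, σ_w² > 0, δ ≥ 0 and δ < pmin < pmax be real numbers, set β = (2/γ) · log( (pmax − δ)/(pmin − δ) ), f(t) = 2/( γ β (t − δ) ) for t ∈ [pmin, pmax], F(p) = ∫_{pmin}^{p} f(t) dt, and suppose pmin = γ ( σ_w² + δ β/2 ). Then for every p ∈ [pmin, pmax], γ · ( σ_w² + (β/2) · ( ∫_{pmin}^{p} t f(t) dt + δ (1 − F(p)) ) ) = p; i.e., the SNIR is constant equal to γ for all transmit powers. -/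
/-!
On `[pmin, pmax]` the density satisfies `(t - δ) f(t) = 2 / (γ β)`, so by linearity of the integral
`∫ t f - δ F(p) = ∫ (t - δ) f = 2 (p - pmin) / (γ β)`. The left-hand side of the claim is therefore
`γ (σw² + δ β / 2) + (p - pmin)`, which equals `p` by the boundary condition.
Splitting the integral needs integrability of `f` and `t f`, which holds because `f` agrees on the
interval with a function continuous there, `δ < pmin` keeping the pole outside.
-/

open Set intervalIntegral

/-- With `β = (2/γ) log((pmax-δ)/(pmin-δ))`, density
`f(t) = 2/(γ β (t-δ))` on `[pmin, pmax]`, `F(p) = ∫_{pmin}^p f`, and the boundary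
condition `pmin = γ (σw² + δ β / 2)`, the SNIR is constant equal to `γ`:
`γ (σw² + (β/2)(∫_{pmin}^p t f(t) dt + δ (1 - F(p)))) = p` for all `p ∈ [pmin, pmax]`. -/
theorem constant_SNIR_constant_residual
    (γ σw2 δ pmin pmax β : ℝ) (f : ℝ → ℝ)
    (hγ : 0 < γ) (hσ : 0 < σw2) (hδ : 0 ≤ δ) (hδmin : δ < pmin) (hlt : pmin < pmax)
    (hβ : β = 2 / γ * Real.log ((pmax - δ) / (pmin - δ)))
    (hf : ∀ t ∈ Icc pmin pmax, f t = 2 / (γ * β * (t - δ)))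
    (hbd : pmin = γ * (σw2 + δ * β / 2)) :
    ∀ p ∈ Icc pmin pmax,
      γ * (σw2 + β / 2 *
        ((∫ t in pmin..p, t * f t) + δ * (1 - ∫ t in pmin..p, f t))) = p := by
  intro p hp
  have hβpos : 0 < β := by
    rw [hβ]
    refine mul_pos (by positivity) (Real.log_pos ?_)
    rw [one_lt_div (by linarith)]
    linarith
  have hsub : ∀ t ∈ uIcc pmin p, t ∈ Icc pmin pmax := fun t ht => by
    rw [uIcc_of_le hp.1] at ht
    exact ⟨ht.1, ht.2.trans hp.2⟩
  have hne : ∀ t ∈ uIcc pmin p, t - δ ≠ 0 := fun t ht => by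
    have := (hsub t ht).1
    exact ne_of_gt (by linarith)
  have hfc : ContinuousOn f (uIcc pmin p) := by
    refine ContinuousOn.congr (f := fun t => 2 / (γ * β * (t - δ))) ?_
      fun t ht => hf t (hsub t ht)
    exact ContinuousOn.div (by fun_prop) (by fun_prop)
      fun t ht => mul_ne_zero (by positivity) (hne t ht)
  have hfi : IntervalIntegrable f MeasureTheory.volume pmin p := hfc.intervalIntegrable
  have htfi : IntervalIntegrable (fun t => t * f t) MeasureTheory.volume pmin p :=
    (continuousOn_id.mul hfc).intervalIntegrable
  have key : (∫ t in pmin..p, t * f t) - δ * ∫ t in pmin..p, f t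
      = (p - pmin) * (2 / (γ * β)) := by
    rw [← integral_const_mul, ← integral_sub htfi (hfi.const_mul δ), ← smul_eq_mul,
      ← integral_const]
    refine integral_congr fun t ht => ?_
    have := hne t ht
    simp only [hf t (hsub t ht)]
    field_simp
  calc γ * (σw2 + β / 2 * ((∫ t in pmin..p, t * f t) + δ * (1 - ∫ t in pmin..p, f t)))
      = γ * (σw2 + δ * β / 2)
        + γ * β / 2 * ((∫ t in pmin..p, t * f t) - δ * ∫ t in pmin..p, f t) := by ring
    _ = pmin + γ * β / 2 * ((p - pmin) * (2 / (γ * β))) := by rw [key, ← hbd]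
    _ = p := by
      field_simp
      ring
end
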